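/- Let X be a set, 𝒞 a finite set of classes with at least two elements, and ρ > 0. Let S and T be probability distributions on X × 𝒞 with X-marginals S_X and T_X (all integrands measurable). Then for any two scoring functions f, f* : X × 𝒞 → ℝ: err_T(f) ≤ err_S^{(ρ)}(f) + err_S^{(ρ)}(f*) − disp_{S_X}^{(ρ)}(f*, f) + disp_{T_X}^{(ρ)}(f*, f) + err_T^{(ρ)}(f*). -/

import Mathlib

open MeasureTheory Real

/-- Ramp function `Φ^ρ`. -/
noncomputable def ramp (ρ t : ℝ) : ℝ := if t < 0 then 1 else if t ≤ ρ then 1 - t / ρ else 0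

/-- Margin `ρ_f(x,c) = f(x,c) − max_{c'≠c} f(x,c')`. -/
noncomputable def margin {X C : Type*} [Fintype C] [DecidableEq C] [Nontrivial C]
    (f : X × C → ℝ) (x : X) (c : C) : ℝ :=
  f (x, c) - (Finset.univ.erase c).sup'
    (by obtain ⟨b, hb⟩ := exists_ne c
        exact ⟨b, Finset.mem_erase.2 ⟨hb, Finset.mem_univ b⟩⟩)
    (fun c' => f (x, c'))

theorem ramp_nonneg' {ρ : ℝ} (hρ : 0 < ρ) (t : ℝ) : 0 ≤ ramp ρ t := by
  unfold ramp
  split_ifs with h1 h2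
  · norm_num
  · have := (div_le_one hρ).2 h2
    linarith
  · norm_num

theorem ramp_le_one' {ρ : ℝ} (hρ : 0 < ρ) (t : ℝ) : ramp ρ t ≤ 1 := by
  unfold ramp
  split_ifs with h1 h2
  · norm_num
  · have := div_nonneg (not_lt.1 h1) hρ.le
    linarith
  · norm_num

theorem ramp_eq_one' {ρ : ℝ} (hρ : 0 < ρ) {t : ℝ} (ht : t ≤ 0) : ramp ρ t = 1 := by
  unfold ramp
  rcases ht.lt_or_eq with h | h
  · simp [h]
  · simp [h, hρ.le]

theorem margin_le' {X C : Type*} [Fintype C] [DecidableEq C] [Nontrivial C]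
    (f : X × C → ℝ) (x : X) (c d : C) (h : d ≠ c) : margin f x c ≤ f (x, c) - f (x, d) := by
  unfold margin
  have := Finset.le_sup' (s := Finset.univ.erase c) (fun c' => f (x, c'))
    (Finset.mem_erase.2 ⟨h, Finset.mem_univ d⟩)
  linarith

/-- `err_T(f) ≤ err_S^{(ρ)}(f) + err_S^{(ρ)}(f*) − disp_{S_X}^{(ρ)}(f*, f)
  + disp_{T_X}^{(ρ)}(f*, f) + err_T^{(ρ)}(f*)`,
where `am` is the fixed argmax tie-breaking rule inducing the classifier `h_f = am f`. -/
theorem stmt5 {X C : Type*} [MeasurableSpace X] [MeasurableSpace C]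
    [Fintype C] [DecidableEq C] [Nontrivial C]
    (ρ : ℝ) (hρ : 0 < ρ)
    (am : (X × C → ℝ) → X → C)
    (ham : ∀ g : X × C → ℝ, ∀ x : X, ∀ c : C, g (x, c) ≤ g (x, am g x))
    (S T : Measure (X × C)) [IsProbabilityMeasure S] [IsProbabilityMeasure T]
    (f fstar : X × C → ℝ)
    -- all integrands measurable (hence integrable, being `[0,1]`-valued)
    (hmeasT : MeasurableSet {p : X × C | am f p.1 ≠ p.2})
    (herrSf : Integrable (fun p => ramp ρ (margin f p.1 p.2)) S)
    (herrSstar : Integrable (fun p => ramp ρ (margin fstar p.1 p.2)) S)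
    (herrTstar : Integrable (fun p => ramp ρ (margin fstar p.1 p.2)) T)
    (hdispS : Integrable (fun x => ramp ρ (margin fstar x (am f x))) (S.map Prod.fst))
    (hdispT : Integrable (fun x => ramp ρ (margin fstar x (am f x))) (T.map Prod.fst)) :
    (T {p : X × C | am f p.1 ≠ p.2}).toReal ≤
      (∫ p, ramp ρ (margin f p.1 p.2) ∂S)
      + (∫ p, ramp ρ (margin fstar p.1 p.2) ∂S)
      - (∫ x, ramp ρ (margin fstar x (am f x)) ∂(S.map Prod.fst))
      + (∫ x, ramp ρ (margin fstar x (am f x)) ∂(T.map Prod.fst))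
      + ∫ p, ramp ρ (margin fstar p.1 p.2) ∂T := by
  have iS := hdispS.comp_measurable measurable_fst
  have iT : Integrable (fun p : X × C => ramp ρ (margin fstar p.1 (am f p.1))) T := hdispT.comp_measurable measurable_fst
  rw [integral_map measurable_fst.aemeasurable hdispS.aestronglyMeasurable,
    integral_map measurable_fst.aemeasurable hdispT.aestronglyMeasurable]
  have h1 : ∫ p, ramp ρ (margin fstar p.1 (am f p.1)) ∂S ≤
      (∫ p, ramp ρ (margin f p.1 p.2) ∂S) + ∫ p, ramp ρ (margin fstar p.1 p.2) ∂S := by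
    rw [← integral_add herrSf herrSstar]
    refine integral_mono iS (herrSf.add herrSstar) fun p => ?_
    simp only [Function.comp]
    by_cases h : am f p.1 = p.2
    · rw [h]
      linarith [ramp_nonneg' hρ (margin f p.1 p.2)]
    · have := margin_le' f p.1 p.2 (am f p.1) h
      have := ramp_eq_one' hρ (t := margin f p.1 p.2) (by linarith [ham f p.1 p.2])
      linarith [ramp_nonneg' hρ (margin fstar p.1 p.2),
        ramp_le_one' hρ (margin fstar p.1 (am f p.1))]
  have h2 : (T {p : X × C | am f p.1 ≠ p.2}).toReal ≤
      (∫ p, ramp ρ (margin fstar p.1 (am f p.1)) ∂T)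
        + ∫ p, ramp ρ (margin fstar p.1 p.2) ∂T := by
    have e := integral_indicator_one (μ := T) hmeasT
    rw [Measure.real] at e
    rw [← e, ← integral_add iT herrTstar]
    refine integral_mono ((integrable_const (1 : ℝ)).indicator hmeasT)
      (iT.add herrTstar) fun p => ?_
    have n1 := ramp_nonneg' hρ (margin fstar p.1 p.2)
    have n2 := ramp_nonneg' hρ (margin fstar p.1 (am f p.1))
    simp only [Function.comp, Set.indicator_apply, Set.mem_setOf_eq, Pi.one_apply]
    split_ifs with h
    · have m1 := margin_le' fstar p.1 p.2 (am f p.1) h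
      have m2 := margin_le' fstar p.1 (am f p.1) p.2 h.symm
      rcases le_total (margin fstar p.1 p.2) 0 with h0 | h0
      · linarith [ramp_eq_one' hρ h0]
      · have := ramp_eq_one' hρ (t := margin fstar p.1 (am f p.1)) (by linarith)
        linarith
    · linarith
  linarith
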